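/- For j ∈ {0,1,2} and every τ in the complex upper half plane, g_{1,j}(τ)² = E₄(τ) − 12·ρʲ·η(τ)⁸, where ρ = (−1 + i√3)/2. -/

import Mathlib

open Complex

/-- `q = exp(2πiτ)`. -/
noncomputable def qq (τ : ℂ) : ℂ := Complex.exp (2 * Real.pi * Complex.I * τ)

/-- `σ_k(n) = Σ_{d ∣ n} d^k`, as a complex number. -/
noncomputable def sigmaC (k n : ℕ) : ℂ := ∑ d ∈ n.divisors, (d : ℂ) ^ k

/-- Eisenstein series `E₂(τ) = 1 - 24 Σ_{n≥1} σ₁(n) qⁿ`. -/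
noncomputable def E₂ (τ : ℂ) : ℂ := 1 - 24 * ∑' n : ℕ, sigmaC 1 (n + 1) * qq τ ^ (n + 1)

/-- Eisenstein series `E₄(τ) = 1 + 240 Σ_{n≥1} σ₃(n) qⁿ`. -/
noncomputable def E₄ (τ : ℂ) : ℂ := 1 + 240 * ∑' n : ℕ, sigmaC 3 (n + 1) * qq τ ^ (n + 1)

/-- Eisenstein series `E₆(τ) = 1 - 504 Σ_{n≥1} σ₅(n) qⁿ`. -/
noncomputable def E₆ (τ : ℂ) : ℂ := 1 - 504 * ∑' n : ℕ, sigmaC 5 (n + 1) * qq τ ^ (n + 1)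

/-- Dedekind eta function `η(τ) = exp(πiτ/12) ∏_{n≥1} (1 - qⁿ)`. -/
noncomputable def η (τ : ℂ) : ℂ :=
  Complex.exp (Real.pi * Complex.I * τ / 12) * ∏' n : ℕ, (1 - qq τ ^ (n + 1))

/-- Theta function `θ(τ) = Σ_{n ∈ ℤ} q^{n²}`. -/
noncomputable def θ (τ : ℂ) : ℂ := ∑' n : ℤ, qq τ ^ (n ^ 2)

/-- The character `χ₋₄`: `χ₋₄(d) = 1, -1, 0` according as `d ≡ 1, 3, 0/2 (mod 4)`. -/
noncomputable def χ₄ (d : ℕ) : ℂ := if d % 4 = 1 then 1 else if d % 4 = 3 then -1 else 0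

/-- The character `χ₋₃`: `χ₋₃(d) = 1, -1, 0` according as `d ≡ 1, 2, 0 (mod 3)`. -/
noncomputable def χ₃ (d : ℕ) : ℂ := if d % 3 = 1 then 1 else if d % 3 = 2 then -1 else 0

/-- `E_{1,-4}(τ) = 1/4 + Σ_{n≥1} (Σ_{d∣n} χ₋₄(d)) qⁿ`. -/
noncomputable def E₁₄ (τ : ℂ) : ℂ :=
  1 / 4 + ∑' n : ℕ, (∑ d ∈ (n + 1).divisors, χ₄ d) * qq τ ^ (n + 1)

/-- `E_{1,-3}(τ) = 1/6 + Σ_{n≥1} (Σ_{d∣n} χ₋₃(d)) qⁿ`. -/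
noncomputable def E₁₃ (τ : ℂ) : ℂ :=
  1 / 6 + ∑' n : ℕ, (∑ d ∈ (n + 1).divisors, χ₃ d) * qq τ ^ (n + 1)

/-- `E_{2,2}(τ) = 2E₂(2τ) - E₂(τ)`. -/
noncomputable def E₂₂ (τ : ℂ) : ℂ := 2 * E₂ (2 * τ) - E₂ τ

/-- `E_{2,4}(τ) = (4E₄(2τ) - E₄(τ))/3`. -/
noncomputable def E₂₄ (τ : ℂ) : ℂ := (4 * E₄ (2 * τ) - E₄ τ) / 3

/-- `E_{3,2}(τ) = (3E₂(3τ) - E₂(τ))/2`. -/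
noncomputable def E₃₂ (τ : ℂ) : ℂ := (3 * E₂ (3 * τ) - E₂ τ) / 2

/-- `E_{3,4}(τ) = (9E₄(3τ) - E₄(τ))/8`. -/
noncomputable def E₃₄ (τ : ℂ) : ℂ := (9 * E₄ (3 * τ) - E₄ τ) / 8

/-- `E_{4,2}(τ) = (4E₂(4τ) - E₂(τ))/3`. -/
noncomputable def E₄₂ (τ : ℂ) : ℂ := (4 * E₂ (4 * τ) - E₂ τ) / 3

/-- `E'_{4,2}(τ) = 4E₂(4τ) - 4E₂(2τ) + E₂(τ)`. -/
noncomputable def E₄₂' (τ : ℂ) : ℂ := 4 * E₂ (4 * τ) - 4 * E₂ (2 * τ) + E₂ τ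

/-- `f_{1,j}(τ) = 2E₂(τ) - ((3+(-1)ʲi√3)/6)E₂(τ/2) - ((3-(-1)ʲi√3)/6)E₂((τ+1)/2)`. -/
noncomputable def f₁ (j : ℕ) (τ : ℂ) : ℂ :=
  2 * E₂ τ - ((3 + (-1 : ℂ) ^ j * Complex.I * Real.sqrt 3) / 6) * E₂ (τ / 2)
    - ((3 - (-1 : ℂ) ^ j * Complex.I * Real.sqrt 3) / 6) * E₂ ((τ + 1) / 2)

/-- `g_{1,j}(τ) = (3/2)E₂(τ) - (1/4) Σ_{0≤m≤2, m≢j (mod 3)} E₂((τ+m)/3)`. -/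
noncomputable def g₁ (j : ℕ) (τ : ℂ) : ℂ :=
  (3 / 2) * E₂ τ -
    (1 / 4) * ∑ m ∈ (Finset.range 3).filter (fun m => ¬ m % 3 = j % 3), E₂ ((τ + m) / 3)

/-- `f_{2,j}(τ) = 4E_{1,-4}(τ) + (-1)ʲ·2i·(E_{1,-4}(τ/2) - E_{1,-4}((τ+1)/2))`. -/
noncomputable def f₂ (j : ℕ) (τ : ℂ) : ℂ :=
  4 * E₁₄ τ + (-1 : ℂ) ^ j * 2 * Complex.I * (E₁₄ (τ / 2) - E₁₄ ((τ + 1) / 2))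

/-- `f_{3,j}(τ) = 6E_{1,-3}(2τ) + (-1)ʲ·i√3·(E_{1,-3}(τ/2) - E_{1,-3}((τ+1)/2))`. -/
noncomputable def f₃ (j : ℕ) (τ : ℂ) : ℂ :=
  6 * E₁₃ (2 * τ) +
    (-1 : ℂ) ^ j * Complex.I * Real.sqrt 3 * (E₁₃ (τ / 2) - E₁₃ ((τ + 1) / 2))

/-- `f_{4,j}(τ) = θ(τ/2 - (-1)ʲ/4)`. -/
noncomputable def f₄ (j : ℕ) (τ : ℂ) : ℂ := θ (τ / 2 - (-1 : ℂ) ^ j / 4)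

/-- `g_{4,j}(τ) = 2θ(2τ)² - θ((τ+j)/2)²`. -/
noncomputable def g₄ (j : ℕ) (τ : ℂ) : ℂ := 2 * θ (2 * τ) ^ 2 - θ ((τ + j) / 2) ^ 2

/-- `E_{3,-3,1}(τ) = -1/9 + Σ_{n≥1} (Σ_{d∣n} d²χ₋₃(d)) qⁿ`. -/
noncomputable def E₃₃₁ (τ : ℂ) : ℂ :=
  -(1 / 9) + ∑' n : ℕ, (∑ d ∈ (n + 1).divisors, (d : ℂ) ^ 2 * χ₃ d) * qq τ ^ (n + 1)

/-- `E_{3,1,-3}(τ) = Σ_{n≥1} (Σ_{d∣n} d²χ₋₃(n/d)) qⁿ`. -/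
noncomputable def E₃₁₃ (τ : ℂ) : ℂ :=
  ∑' n : ℕ, (∑ d ∈ (n + 1).divisors, (d : ℂ) ^ 2 * χ₃ ((n + 1) / d)) * qq τ ^ (n + 1)

open Filter Topology

lemma qq_norm_lt_one {τ : ℂ} (hτ : 0 < τ.im) : ‖qq τ‖ < 1 :=
  UpperHalfPlane.norm_exp_two_pi_I_lt_one ⟨τ, hτ⟩

lemma norm_sigmaC_le (k n : ℕ) : ‖sigmaC k n‖ ≤ (n : ℝ) ^ (k + 1) := by
  have h : sigmaC k n = ((ArithmeticFunction.sigma k n : ℕ) : ℂ) := by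
    simp [sigmaC, ArithmeticFunction.sigma_apply]
  rw [h, Complex.norm_natCast]
  exact_mod_cast ArithmeticFunction.sigma_le_pow_succ k n

lemma summable_sigmaC_mul_pow (k : ℕ) {q : ℂ} (hq : ‖q‖ < 1) :
    Summable fun n : ℕ ↦ sigmaC k n * q ^ n := by
  refine Summable.of_norm_bounded
    (summable_norm_pow_mul_geometric_of_norm_lt_one (k + 1) hq) fun n ↦ ?_
  rw [norm_mul, norm_mul, norm_pow _ (k + 1), Complex.norm_natCast]
  gcongr
  exact norm_sigmaC_le k n

lemma tsum_sigmaC_succ (k : ℕ) {q : ℂ} (hq : ‖q‖ < 1) :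
    ∑' n : ℕ, sigmaC k (n + 1) * q ^ (n + 1) = ∑' n : ℕ, sigmaC k n * q ^ n := by
  rw [(summable_sigmaC_mul_pow k hq).tsum_eq_zero_add]
  simp [sigmaC]

/-- The linear coefficient of the divisor-sum power series is `1`. -/
lemma tendsto_tsum_sigmaC_div (k : ℕ) :
    Tendsto (fun q : ℂ ↦ (∑' n : ℕ, sigmaC k (n + 1) * q ^ (n + 1)) / q) (𝓝[≠] 0) (𝓝 1) := by
  have hlim : Tendsto (fun q : ℂ ↦ ∑' n : ℕ, sigmaC k (n + 1) * q ^ n) (𝓝 0)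
      (𝓝 (∑' n : ℕ, sigmaC k (n + 1) * 0 ^ n)) := by
    refine tendsto_tsum_of_dominated_convergence
      (bound := fun n : ℕ ↦ 2 * ‖((n + 1 : ℕ) : ℝ) ^ (k + 1) * (1 / 2 : ℝ) ^ (n + 1)‖) ?_
      (fun n ↦ ?_) ?_
    · exact (((summable_nat_add_iff 1).mpr (summable_norm_pow_mul_geometric_of_norm_lt_one
        (R := ℝ) (k + 1) (r := 1 / 2) (by norm_num))).mul_left 2)
    · exact tendsto_const_nhds.mul (tendsto_id.pow n)
    · filter_upwards [Metric.ball_mem_nhds (0 : ℂ) (by norm_num : (0 : ℝ) < 1 / 2)] with q hq n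
      have hq' : ‖q‖ ≤ 1 / 2 := by simpa using (mem_ball_zero_iff.mp hq).le
      rw [norm_mul, norm_pow, norm_mul, norm_pow, norm_pow, Real.norm_natCast, pow_succ (‖_‖) n]
      have h2 : ‖q‖ ^ n ≤ (1 / 2 : ℝ) ^ n := by gcongr
      have h3 := norm_sigmaC_le k (n + 1)
      have h4 : ‖(1 / 2 : ℝ)‖ = 1 / 2 := by norm_num
      rw [h4]
      calc _ ≤ ((n + 1 : ℕ) : ℝ) ^ (k + 1) * (1 / 2 : ℝ) ^ n := by gcongr
        _ = _ := by ring
  have h0 : ∑' n : ℕ, sigmaC k (n + 1) * (0 : ℂ) ^ n = 1 := by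
    rw [tsum_eq_single 0 (fun n hn ↦ by simp [hn])]
    simp [sigmaC]
  rw [h0] at hlim
  refine (hlim.mono_left nhdsWithin_le_nhds).congr' ?_
  filter_upwards [self_mem_nhdsWithin] with q hq
  rw [eq_div_iff hq, ← tsum_mul_right]
  exact tsum_congr fun n ↦ by ring

lemma sigma_one_three_mul (n : ℕ) :
    sigmaC 1 (3 * n) + (if 3 ∣ n then 3 * sigmaC 1 (n / 3) else 0) = 4 * sigmaC 1 n := by
  have key : ∀ m : ℕ, m ≠ 0 → sigmaC 1 (3 * m) =
      3 * sigmaC 1 m + ∑ d ∈ m.divisors with ¬ 3 ∣ d, (d : ℂ) := by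
    intro m hm
    have h3 : ((3 * m).divisors.filter (3 ∣ ·)) = m.divisors.image (3 * ·) := by
      ext d
      simp only [Finset.mem_filter, Nat.mem_divisors, Finset.mem_image]
      constructor
      · rintro ⟨⟨h, -⟩, e, rfl⟩
        exact ⟨e, ⟨Nat.dvd_of_mul_dvd_mul_left (by norm_num) h, hm⟩, rfl⟩
      · rintro ⟨e, ⟨h, -⟩, rfl⟩
        exact ⟨⟨Nat.mul_dvd_mul_left 3 h, by simpa⟩, dvd_mul_right _ _⟩
    have h1 : ((3 * m).divisors.filter (¬ 3 ∣ ·)) = m.divisors.filter (¬ 3 ∣ ·) := by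
      ext d
      simp only [Finset.mem_filter, Nat.mem_divisors]
      constructor
      · rintro ⟨⟨h, -⟩, hd⟩
        exact ⟨⟨(((Nat.Prime.coprime_iff_not_dvd Nat.prime_three).mpr hd).symm).dvd_of_dvd_mul_left
          h, hm⟩, hd⟩
      · rintro ⟨⟨h, -⟩, hd⟩
        exact ⟨⟨h.mul_left 3, by simpa⟩, hd⟩
    rw [sigmaC, ← Finset.sum_filter_add_sum_filter_not _ (3 ∣ ·), h3, h1,
      Finset.sum_image (by intro a _ b _ h; simpa using h), sigmaC, Finset.mul_sum]
    simp
  rcases eq_or_ne n 0 with rfl | hn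
  · simp [sigmaC]
  have hs : sigmaC 1 n = (if 3 ∣ n then 3 * sigmaC 1 (n / 3) else 0) +
      ∑ d ∈ n.divisors with ¬ 3 ∣ d, (d : ℂ) := by
    split_ifs with h
    · obtain ⟨m, rfl⟩ := h
      have hm : m ≠ 0 := by rintro rfl; simp at hn
      rw [key m hm, Nat.mul_div_cancel_left _ (by norm_num)]
      congr 1
      refine Finset.sum_congr ?_ fun _ _ ↦ rfl
      ext d
      simp only [Finset.mem_filter, Nat.mem_divisors]
      constructor
      · rintro ⟨⟨h, -⟩, hd⟩
        exact ⟨⟨h.mul_left 3, hn⟩, hd⟩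
      · rintro ⟨⟨h, -⟩, hd⟩
        exact ⟨⟨(((Nat.Prime.coprime_iff_not_dvd Nat.prime_three).mpr hd).symm).dvd_of_dvd_mul_left
          h, hm⟩, hd⟩
    · rw [zero_add, Finset.filter_true_of_mem]
      · simp [sigmaC]
      · intro d hd h'
        exact h (h'.trans (Nat.dvd_of_mem_divisors hd))
  rw [key n hn]
  linear_combination (-1 : ℂ) * hs

lemma qq_add_one (τ : ℂ) : qq (τ + 1) = qq τ := by
  rw [qq, mul_add, mul_one, Complex.exp_add, Complex.exp_two_pi_mul_I, mul_one, qq]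

lemma cubeRoot_eq_exp : (-1 + Complex.I * Real.sqrt 3) / 2 = qq (1 / 3) := by
  have h : (2 * Real.pi * Complex.I * (1 / 3) : ℂ) = ((2 * Real.pi / 3 : ℝ) : ℂ) * Complex.I := by
    push_cast; ring
  have hc : Real.cos (2 * Real.pi / 3) = -1 / 2 := by
    rw [show 2 * Real.pi / 3 = Real.pi - Real.pi / 3 by ring, Real.cos_pi_sub, Real.cos_pi_div_three]
    norm_num
  have hs : Real.sin (2 * Real.pi / 3) = Real.sqrt 3 / 2 := by
    rw [show 2 * Real.pi / 3 = Real.pi - Real.pi / 3 by ring, Real.sin_pi_sub, Real.sin_pi_div_three]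
  rw [qq, h, Complex.exp_mul_I, ← Complex.ofReal_cos, ← Complex.ofReal_sin, hc, hs]
  push_cast
  ring

lemma cubeRoot_sq_add : qq (1 / 3) ^ 2 + qq (1 / 3) + 1 = 0 := by
  have h : (Real.sqrt 3 : ℂ) ^ 2 = 3 := by
    rw [← Complex.ofReal_pow, Real.sq_sqrt (by norm_num)]; norm_num
  rw [← cubeRoot_eq_exp]
  linear_combination (Complex.I ^ 2 / 4) * h + (3 / 4) * Complex.I_sq

lemma cubeRoot_pow_three : qq (1 / 3) ^ 3 = 1 := by
  linear_combination (qq (1 / 3) - 1) * cubeRoot_sq_add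

lemma qq_add_div_three (τ : ℂ) (m : ℕ) : qq ((τ + m) / 3) = qq (1 / 3) ^ m * qq (τ / 3) := by
  simp only [qq, ← Complex.exp_nat_mul, ← Complex.exp_add]
  congr 1
  ring

lemma qq_div_three_pow (τ : ℂ) : qq (τ / 3) ^ 3 = qq τ := by
  simp only [qq, ← Complex.exp_nat_mul]
  congr 1
  push_cast
  ring

lemma qq_three_mul (τ : ℂ) : qq (3 * τ) = qq τ ^ 3 := by
  rw [← qq_div_three_pow]
  congr 2
  ring

lemma im_div_three_pos {τ : ℂ} (hτ : 0 < τ.im) (m : ℕ) : 0 < ((τ + m) / 3).im := by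
  rw [show (τ + m) / 3 = ((1 / 3 : ℝ) : ℂ) * (τ + m) by push_cast; ring, Complex.im_ofReal_mul]
  simpa using hτ

/-- The divisor-sum form of the eigenvalue equation `T₃ E₂ = 4 E₂`. -/
lemma tsum_sigmaC_hecke_three {s : ℂ} (hs : ‖s‖ < 1) :
    3 * (3 * ∑' n : ℕ, sigmaC 1 n * (s ^ 9) ^ n) +
      ∑ m ∈ Finset.range 3, ∑' n : ℕ, sigmaC 1 n * (qq (1 / 3) ^ m * s) ^ n =
    12 * ∑' n : ℕ, sigmaC 1 n * (s ^ 3) ^ n := by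
  set ρ := qq (1 / 3) with hρ
  have hρn : ‖ρ‖ = 1 := by
    have h : ‖ρ‖ ^ 3 = 1 := by rw [← norm_pow, hρ, cubeRoot_pow_three, norm_one]
    exact (pow_eq_one_iff_of_nonneg (norm_nonneg _) (by norm_num)).mp h
  have hpow (k : ℕ) (hk : k ≠ 0) : ‖s ^ k‖ < 1 := by
    rw [norm_pow]; exact pow_lt_one₀ (norm_nonneg _) hs hk
  have hsum (m : ℕ) : Summable fun n : ℕ ↦ sigmaC 1 n * (ρ ^ m * s) ^ n :=
    summable_sigmaC_mul_pow 1 (by rw [norm_mul, norm_pow, hρn, one_pow, one_mul]; exact hs)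
  have hfilter : ∑ m ∈ Finset.range 3, ∑' n : ℕ, sigmaC 1 n * (ρ ^ m * s) ^ n =
      ∑' n : ℕ, 3 * (sigmaC 1 (3 * n) * (s ^ 3) ^ n) := by
    rw [← Summable.tsum_finsetSum fun m _ ↦ hsum m,
      ← (mul_right_injective₀ (three_ne_zero (α := ℕ))).tsum_eq]
    · refine tsum_congr fun n ↦ ?_
      have h (m : ℕ) : (ρ ^ m * s) ^ (3 * n) = (s ^ 3) ^ n := by
        rw [mul_pow, ← pow_mul, show m * (3 * n) = 3 * (m * n) by ring, pow_mul,
          cubeRoot_pow_three, one_pow, one_mul, pow_mul]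
      simp [h]
    · intro n hn
      by_contra hnr
      refine hn ?_
      have h3 : ¬ 3 ∣ n := fun ⟨k, hk⟩ ↦ hnr ⟨k, hk.symm⟩
      obtain ⟨k, hk | hk⟩ : ∃ k, n = 3 * k + 1 ∨ n = 3 * k + 2 := ⟨n / 3, by omega⟩
      · have : ρ ^ n = ρ := by rw [hk, pow_succ, pow_mul, cubeRoot_pow_three]; simp
        simp only [Finset.sum_range_succ, Finset.sum_range_zero, mul_pow, ← pow_mul, mul_comm _ n]
        simp only [pow_mul, this]
        linear_combination (sigmaC 1 n * s ^ n) * cubeRoot_sq_add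
      · have : ρ ^ n = ρ ^ 2 := by rw [hk, pow_add, pow_mul, cubeRoot_pow_three]; simp
        simp only [Finset.sum_range_succ, Finset.sum_range_zero, mul_pow, ← pow_mul, mul_comm _ n]
        simp only [pow_mul, this]
        linear_combination (sigmaC 1 n * s ^ n) * (cubeRoot_sq_add + ρ * cubeRoot_pow_three)
  have hinsert : 3 * ∑' n : ℕ, sigmaC 1 n * (s ^ 9) ^ n =
      ∑' n : ℕ, (if 3 ∣ n then 3 * sigmaC 1 (n / 3) else 0) * (s ^ 3) ^ n := by
    rw [← tsum_mul_left, ← (mul_right_injective₀ (three_ne_zero (α := ℕ))).tsum_eq (f := fun n ↦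
      (if 3 ∣ n then 3 * sigmaC 1 (n / 3) else 0) * (s ^ 3) ^ n)]
    · refine tsum_congr fun n ↦ ?_
      simp only [dvd_mul_right, if_true, Nat.mul_div_cancel_left n three_pos]
      ring
    · intro n hn
      by_contra hnr
      exact hn (by simp [show ¬ 3 ∣ n from fun ⟨k, hk⟩ ↦ hnr ⟨k, hk.symm⟩])
  have hS := summable_sigmaC_mul_pow 1 (hpow 3 (by norm_num))
  have hA : Summable fun n : ℕ ↦ sigmaC 1 (3 * n) * (s ^ 3) ^ n := by
    refine ((summable_sigmaC_mul_pow 1 hs).comp_injective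
      (mul_right_injective₀ (three_ne_zero (α := ℕ)))).congr fun n ↦ ?_
    simp [pow_mul]
  rw [hfilter, hinsert, tsum_mul_left, ← mul_add, show (12 : ℂ) = 3 * 4 by norm_num, mul_assoc,
    ← tsum_mul_left, ← Summable.tsum_add _ hA]
  · congr 1
    refine tsum_congr fun n ↦ ?_
    linear_combination (s ^ 3) ^ n * sigma_one_three_mul n
  · refine ((hS.mul_left 4).sub hA).congr fun n ↦ ?_
    linear_combination (-(s ^ 3) ^ n) * sigma_one_three_mul n

lemma E₂_hecke_three {τ : ℂ} (hτ : 0 < τ.im) :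
    9 * E₂ (3 * τ) + ∑ m ∈ Finset.range 3, E₂ ((τ + m) / 3) = 12 * E₂ τ := by
  have hs : ‖qq (τ / 3)‖ < 1 := qq_norm_lt_one (by simpa using im_div_three_pos hτ 0)
  have h3 : ‖qq (3 * τ)‖ < 1 := qq_norm_lt_one (by simpa using hτ)
  have hm (m : ℕ) : ‖qq (1 / 3) ^ m * qq (τ / 3)‖ < 1 := by
    rw [← qq_add_div_three]
    exact qq_norm_lt_one (im_div_three_pos hτ m)
  have key := tsum_sigmaC_hecke_three hs
  simp only [E₂, tsum_sigmaC_succ 1 h3, tsum_sigmaC_succ 1 (qq_norm_lt_one hτ),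
    tsum_sigmaC_succ 1 (hm _), qq_add_div_three, Finset.sum_sub_distrib, ← Finset.mul_sum]
  rw [qq_three_mul, ← qq_div_three_pow τ, ← pow_mul]
  simp only [Finset.sum_const, Finset.card_range, nsmul_eq_mul]
  push_cast
  linear_combination (-24 : ℂ) * key

open UpperHalfPlane in
lemma E₂_eq_mathlib (z : ℍ) : E₂ z = EisensteinSeries.E2 z := by
  rw [EisensteinSeries.E2_eq_tsum_cexp, E₂, tsum_pnat_eq_tsum_succ (f := fun n ↦
    (ArithmeticFunction.sigma 1 n : ℂ) * cexp (2 * Real.pi * Complex.I * z) ^ n)]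
  simp [sigmaC, ArithmeticFunction.sigma_apply, qq]

open UpperHalfPlane in
lemma E₄_eq_mathlib (z : ℍ) : E₄ z = ModularForm.E₄ z := by
  rw [ModularForm.E₄, EisensteinSeries.q_expansion_bernoulli _ ⟨2, rfl⟩, E₄]
  simp only [zpow_natCast]
  rw [tsum_pnat_eq_tsum_succ (f := fun n ↦
    (ArithmeticFunction.sigma (4 - 1) n : ℂ) * cexp (2 * Real.pi * Complex.I * z) ^ n)]
  have hb : bernoulli 4 = -1 / 30 := by decide +kernel
  norm_num [sigmaC, ArithmeticFunction.sigma_apply, qq, hb]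

lemma η_eq_mathlib (τ : ℂ) : η τ = ModularForm.eta τ := by
  simp only [η, ModularForm.eta, ModularForm.eta_q_eq_pow, qq, Function.Periodic.qParam]
  congr 2
  push_cast
  ring

lemma E₂_add_one (τ : ℂ) : E₂ (τ + 1) = E₂ τ := by
  simp [E₂, qq_add_one]

lemma E₄_add_one (τ : ℂ) : E₄ (τ + 1) = E₄ τ := by
  simp [E₄, qq_add_one]

lemma η_pow_eight (τ : ℂ) :
    η τ ^ 8 = qq (τ / 3) * (∏' n : ℕ, (1 - qq τ ^ (n + 1))) ^ 8 := by
  rw [η, mul_pow, ← Complex.exp_nat_mul, qq]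
  congr 2
  push_cast
  ring

lemma η_pow_eight_add_one (τ : ℂ) : η (τ + 1) ^ 8 = qq (1 / 3) * η τ ^ 8 := by
  have h := qq_add_div_three τ 1
  rw [η_pow_eight, η_pow_eight, qq_add_one]
  push_cast at h
  rw [h]
  ring

/-- The quasi-modular transformation law of `E₂`. -/
lemma E₂_moebius {a b c d : ℤ} (h : a * d - b * c = 1) {τ : ℂ} (hτ : 0 < τ.im) :
    E₂ ((a * τ + b) / (c * τ + d)) =
      (c * τ + d) ^ 2 * E₂ τ + 6 / (Real.pi * Complex.I) * c * (c * τ + d) := by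
  let γ : Matrix.SpecialLinearGroup (Fin 2) ℤ := ⟨!![a, b; c, d], by simp [Matrix.det_fin_two, h]⟩
  let z : UpperHalfPlane := ⟨τ, hτ⟩
  have hact := congrFun (EisensteinSeries.E2_slash_action γ) z
  have hden : UpperHalfPlane.denom γ z = c * τ + d := by
    rw [ModularGroup.denom_apply]
    rfl
  have hne : (c * τ + d : ℂ) ≠ 0 := hden ▸ UpperHalfPlane.denom_ne_zero γ z
  rw [ModularForm.SL_slash_apply] at hact
  have hcoe : ((γ • z : UpperHalfPlane) : ℂ) = (a * τ + b) / (c * τ + d) := by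
    rw [UpperHalfPlane.coe_specialLinearGroup_apply]
    simp [γ, z]
  simp only [Pi.sub_apply, Pi.smul_apply, EisensteinSeries.D2, hden, ← E₂_eq_mathlib, hcoe,
    riemannZeta_two, smul_eq_mul] at hact
  have hγ : (γ 1 0 : ℤ) = c := rfl
  rw [hγ, show ((z : UpperHalfPlane) : ℂ) = τ from rfl] at hact
  have hpi : (Real.pi : ℂ) ≠ 0 := by exact_mod_cast Real.pi_ne_zero
  rw [zpow_neg, ← div_eq_mul_inv, div_eq_iff (zpow_ne_zero _ hne)] at hact
  rw [hact]
  norm_cast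
  push_cast
  field_simp
  linear_combination (-6 * c : ℂ) * Complex.I_sq

lemma E₂_neg_inv {τ : ℂ} (hτ : 0 < τ.im) :
    E₂ (-1 / τ) = τ ^ 2 * E₂ τ + 6 / (Real.pi * Complex.I) * τ := by
  have h := E₂_moebius (a := 0) (b := -1) (c := 1) (d := 0) (by norm_num) hτ
  simpa using h

open UpperHalfPlane in
lemma E₄_neg_inv {τ : ℂ} (hτ : 0 < τ.im) : E₄ (-1 / τ) = τ ^ 4 * E₄ τ := by
  have hmem : (ModularGroup.S : GL (Fin 2) ℝ) ∈ (Matrix.SpecialLinearGroup.mapGL ℝ).range :=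
    ⟨ModularGroup.S, rfl⟩
  have h := congrFun (SlashInvariantForm.slash_action_eqn ModularForm.E₄ _ hmem) ⟨τ, hτ⟩
  have hτ0 : τ ≠ 0 := by rintro rfl; simp at hτ
  rw [← ModularForm.SL_slash, ModularForm.SL_slash_apply, ModularGroup.denom_apply,
    ← E₄_eq_mathlib, ← E₄_eq_mathlib, UpperHalfPlane.modular_S_smul] at h
  simp only [ModularGroup.S, zpow_neg] at h
  norm_num at h
  rw [neg_div, one_div, ← h]
  field_simp

lemma η_neg_inv {τ : ℂ} (hτ : 0 < τ.im) : η (-1 / τ) ^ 8 = τ ^ 4 * η τ ^ 8 := by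
  have h := ModularForm.eta_comp_eq_csqrt_I_inv hτ
  have hτ0 : τ ≠ 0 := by rintro rfl; simp at hτ
  have hsqrt {w : ℂ} (hw : w ≠ 0) : Complex.sqrt w ^ 8 = w ^ 4 := by
    rw [sqrt_eq_exp hw, ← Complex.exp_nat_mul]
    rw [show ((8 : ℕ) : ℂ) * (Complex.log w / 2) = (4 : ℕ) * Complex.log w by push_cast; ring,
      Complex.exp_nat_mul, Complex.exp_log hw]
  simp only [Function.comp_apply, Pi.smul_apply, Pi.mul_apply, smul_eq_mul] at h
  rw [η_eq_mathlib, η_eq_mathlib, h, mul_pow, mul_pow, inv_pow, hsqrt Complex.I_ne_zero, hsqrt hτ0,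
    Complex.I_pow_four, inv_one, one_mul]

lemma g₁_mod_three (j : ℕ) : g₁ (j % 3) = g₁ j := by
  funext τ
  simp [g₁]

lemma g₁_zero (τ : ℂ) :
    g₁ 0 τ = 3 / 2 * E₂ τ - 1 / 4 * (E₂ ((τ + 1) / 3) + E₂ ((τ + 2) / 3)) := by
  rw [g₁, show (Finset.range 3).filter (fun m ↦ ¬ m % 3 = 0 % 3) = {1, 2} by decide]
  simp

lemma g₁_one (τ : ℂ) :
    g₁ 1 τ = 3 / 2 * E₂ τ - 1 / 4 * (E₂ (τ / 3) + E₂ ((τ + 2) / 3)) := by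
  rw [g₁, show (Finset.range 3).filter (fun m ↦ ¬ m % 3 = 1 % 3) = {0, 2} by decide]
  simp

lemma g₁_two (τ : ℂ) :
    g₁ 2 τ = 3 / 2 * E₂ τ - 1 / 4 * (E₂ (τ / 3) + E₂ ((τ + 1) / 3)) := by
  rw [g₁, show (Finset.range 3).filter (fun m ↦ ¬ m % 3 = 2 % 3) = {0, 1} by decide]
  simp

lemma g₁_add_one {j : ℕ} (hj : j < 3) (τ : ℂ) : g₁ j (τ + 1) = g₁ (j + 1) τ := by
  have h3 : E₂ ((τ + 3) / 3) = E₂ (τ / 3) := by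
    rw [← E₂_add_one (τ / 3)]
    congr 1
    ring
  have e1 : τ + 1 + 1 = τ + 2 := by ring
  have e2 : τ + 1 + 2 = τ + 3 := by ring
  interval_cases j
  · rw [g₁_zero, g₁_one, E₂_add_one, e1, e2, h3]
    ring
  · rw [g₁_one, g₁_two, E₂_add_one, e2, h3]
    ring
  · rw [← g₁_mod_three (2 + 1), g₁_two, g₁_zero, E₂_add_one, e1]

lemma g₁_sq_neg_inv {j : ℕ} (hj : j < 3) {τ : ℂ} (hτ : 0 < τ.im) :
    g₁ j (-1 / τ) ^ 2 = τ ^ 4 * g₁ j τ ^ 2 := by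
  have hτ0 : τ ≠ 0 := by rintro rfl; simp at hτ
  have h0 : E₂ (-1 / τ / 3) = 9 * τ ^ 2 * E₂ (3 * τ) + 3 * (6 / (Real.pi * Complex.I)) * τ := by
    have h := E₂_neg_inv (τ := 3 * τ) (by simpa using hτ)
    rw [show -1 / τ / 3 = -1 / (3 * τ) by field_simp, h]
    ring
  have h1 : E₂ ((-1 / τ + 1) / 3) =
      τ ^ 2 * E₂ ((τ + 2) / 3) + 3 * (6 / (Real.pi * Complex.I)) * τ := by
    have h := E₂_moebius (a := 1) (b := -1) (c := 3) (d := -2) (by norm_num)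
      (im_div_three_pos hτ 2)
    push_cast at h
    have e : 3 * ((τ + 2) / 3) + -2 = τ := by ring
    rw [e] at h
    rw [← show (1 * ((τ + 2) / 3) + -1) / τ = (-1 / τ + 1) / 3 by field_simp; ring, h]
    ring
  have h2 : E₂ ((-1 / τ + 2) / 3) =
      τ ^ 2 * E₂ ((τ + 1) / 3) + 3 * (6 / (Real.pi * Complex.I)) * τ := by
    have h := E₂_moebius (a := 2) (b := -1) (c := 3) (d := -1) (by norm_num)
      (im_div_three_pos hτ 1)
    push_cast at h
    have e : 3 * ((τ + 1) / 3) + -1 = τ := by ring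
    rw [e] at h
    rw [← show (2 * ((τ + 1) / 3) + -1) / τ = (-1 / τ + 2) / 3 by field_simp; ring, h]
    ring
  have hecke := E₂_hecke_three hτ
  simp only [Finset.sum_range_succ, Finset.sum_range_zero] at hecke
  norm_num at hecke
  have hS := E₂_neg_inv hτ
  interval_cases j
  · have h : g₁ 0 (-1 / τ) = τ ^ 2 * g₁ 0 τ := by
      rw [g₁_zero, g₁_zero, hS, h1, h2]
      ring
    rw [h]
    ring
  · have h : g₁ 1 (-1 / τ) = -(τ ^ 2 * g₁ 1 τ) := by
      rw [g₁_one, g₁_one, hS, h0, h2]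
      linear_combination (-τ ^ 2 / 4) * hecke
    rw [h]
    ring
  · have h : g₁ 2 (-1 / τ) = -(τ ^ 2 * g₁ 2 τ) := by
      rw [g₁_two, g₁_two, hS, h0, h1]
      linear_combination (-τ ^ 2 / 4) * hecke
    rw [h]
    ring

/-- The difference of the two sides of the identity for `g_{1,j}²`. -/
noncomputable def gDefect (j : ℕ) (τ : ℂ) : ℂ :=
  g₁ j τ ^ 2 - E₄ τ + 12 * qq (1 / 3) ^ j * η τ ^ 8

lemma gDefect_mod_three (j : ℕ) : gDefect (j % 3) = gDefect j := by
  funext τ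
  have h : qq (1 / 3) ^ j = qq (1 / 3) ^ (j % 3) := by
    conv_lhs => rw [← Nat.mod_add_div j 3, pow_add, pow_mul, cubeRoot_pow_three, one_pow, mul_one]
  rw [gDefect, gDefect, g₁_mod_three, h]

lemma gDefect_add_one {j : ℕ} (hj : j < 3) (τ : ℂ) : gDefect j (τ + 1) = gDefect (j + 1) τ := by
  rw [gDefect, gDefect, g₁_add_one hj, E₄_add_one, η_pow_eight_add_one]
  ring

lemma gDefect_neg_inv {j : ℕ} (hj : j < 3) {τ : ℂ} (hτ : 0 < τ.im) :
    gDefect j (-1 / τ) = τ ^ 4 * gDefect j τ := by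
  rw [gDefect, gDefect, g₁_sq_neg_inv hj hτ, E₄_neg_inv hτ, η_neg_inv hτ]
  ring

open UpperHalfPlane in
lemma differentiableOn_E₂ : DifferentiableOn ℂ E₂ {τ | 0 < τ.im} :=
  (UpperHalfPlane.mdifferentiable_iff.mp E2_mdifferentiable).congr fun τ hτ ↦ by
    simp [← E₂_eq_mathlib, ofComplex_apply_of_im_pos hτ]

open UpperHalfPlane in
lemma differentiableOn_E₄ : DifferentiableOn ℂ E₄ {τ | 0 < τ.im} :=
  (UpperHalfPlane.mdifferentiable_iff.mp ModularForm.E₄.holo').congr fun τ hτ ↦ by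
    simp only [Function.comp_apply, ofComplex_apply_of_im_pos hτ]
    exact E₄_eq_mathlib ⟨τ, hτ⟩

lemma differentiableOn_η : DifferentiableOn ℂ η {τ | 0 < τ.im} := fun τ hτ ↦ by
  rw [show η = ModularForm.eta from funext η_eq_mathlib]
  exact (ModularForm.differentiableAt_eta_of_mem_upperHalfPlaneSet hτ).differentiableWithinAt

lemma differentiableOn_g₁ (j : ℕ) : DifferentiableOn ℂ (g₁ j) {τ | 0 < τ.im} := by
  refine (differentiableOn_E₂.const_mul _).sub (DifferentiableOn.const_mul ?_ _)
  refine DifferentiableOn.fun_sum fun m _ ↦ ?_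
  exact differentiableOn_E₂.comp (by fun_prop) fun τ hτ ↦ im_div_three_pos hτ m

lemma differentiableOn_gDefect (j : ℕ) : DifferentiableOn ℂ (gDefect j) {τ | 0 < τ.im} :=
  (((differentiableOn_g₁ j).fun_pow 2).sub differentiableOn_E₄).add
    ((differentiableOn_η.fun_pow 8).const_mul _)

open UpperHalfPlane in
lemma tendsto_qq_div_three :
    Tendsto (fun z : ℍ ↦ qq ((z : ℂ) / 3)) atImInfty (𝓝[≠] 0) := by
  refine ((Function.Periodic.qParam_tendsto (h := 3) (by norm_num)).comp
    tendsto_coe_atImInfty).congr fun z ↦ ?_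
  simp only [Function.comp_apply, Function.Periodic.qParam, qq]
  congr 1
  push_cast
  ring

open UpperHalfPlane in
lemma tendsto_E₂_add_div_three (m : ℕ) :
    Tendsto (fun z : ℍ ↦ (E₂ (((z : ℂ) + m) / 3) - 1) / qq ((z : ℂ) / 3)) atImInfty
      (𝓝 (-24 * qq (1 / 3) ^ m)) := by
  have hc : qq (1 / 3) ^ m ≠ 0 := pow_ne_zero _ (Complex.exp_ne_zero _)
  have hs : Tendsto (fun z : ℍ ↦ qq (1 / 3) ^ m * qq ((z : ℂ) / 3)) atImInfty (𝓝[≠] 0) := by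
    refine tendsto_nhdsWithin_iff.mpr ⟨?_, .of_forall fun z ↦ mul_ne_zero hc (Complex.exp_ne_zero _)⟩
    simpa using (tendsto_nhds_of_tendsto_nhdsWithin tendsto_qq_div_three).const_mul (qq (1 / 3) ^ m)
  have h := ((tendsto_tsum_sigmaC_div 1).comp hs).const_mul (-24 * qq (1 / 3) ^ m)
  rw [mul_one] at h
  refine h.congr fun z ↦ ?_
  have hz : qq ((z : ℂ) / 3) ≠ 0 := Complex.exp_ne_zero _
  simp only [Function.comp_apply, E₂, qq_add_div_three]
  field_simp
  ring

open UpperHalfPlane in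
lemma tendsto_tsum_sigmaC_qq_div (k : ℕ) :
    Tendsto (fun z : ℍ ↦ (∑' n, sigmaC k (n + 1) * qq z ^ (n + 1)) / qq ((z : ℂ) / 3)) atImInfty
      (𝓝 0) := by
  have hs := tendsto_nhds_of_tendsto_nhdsWithin tendsto_qq_div_three
  have hq : Tendsto (fun z : ℍ ↦ qq z) atImInfty (𝓝[≠] 0) := by
    refine tendsto_nhdsWithin_iff.mpr ⟨?_, .of_forall fun z ↦ Complex.exp_ne_zero _⟩
    simpa [qq_div_three_pow] using hs.pow 3
  have h := ((tendsto_tsum_sigmaC_div k).comp hq).mul (hs.pow 2)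
  rw [zero_pow two_ne_zero, mul_zero] at h
  refine h.congr fun z ↦ ?_
  have hz : qq ((z : ℂ) / 3) ≠ 0 := Complex.exp_ne_zero _
  have hz' : qq (z : ℂ) ≠ 0 := Complex.exp_ne_zero _
  simp only [Function.comp_apply]
  rw [div_mul_eq_mul_div, div_eq_div_iff hz' hz, mul_assoc, ← pow_succ, qq_div_three_pow]

open UpperHalfPlane in
lemma tendsto_E₂_sub_one_div :
    Tendsto (fun z : ℍ ↦ (E₂ z - 1) / qq ((z : ℂ) / 3)) atImInfty (𝓝 0) := by
  simpa [E₂, mul_div_assoc, neg_div] using (tendsto_tsum_sigmaC_qq_div 1).const_mul (-24)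

open UpperHalfPlane in
lemma tendsto_E₄_sub_one_div :
    Tendsto (fun z : ℍ ↦ (E₄ z - 1) / qq ((z : ℂ) / 3)) atImInfty (𝓝 0) := by
  simpa [E₄, mul_div_assoc] using (tendsto_tsum_sigmaC_qq_div 3).const_mul 240

open UpperHalfPlane in
lemma tendsto_η_pow_eight_div :
    Tendsto (fun z : ℍ ↦ η z ^ 8 / qq ((z : ℂ) / 3)) atImInfty (𝓝 1) := by
  have hs := (tendsto_nhds_of_tendsto_nhdsWithin tendsto_qq_div_three).pow 3
  rw [zero_pow three_ne_zero] at hs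
  have hprod := (ModularForm.differentiableOn_tprod_one_sub_pow.differentiableAt
    (Metric.isOpen_ball.mem_nhds (Metric.mem_ball_self one_pos))).continuousAt.tendsto
  have h := (hprod.comp hs).pow 8
  simp only [Function.comp_def, ne_eq, Nat.add_eq_zero_iff, one_ne_zero, and_false,
    not_false_eq_true, zero_pow, sub_zero, tprod_one, one_pow, qq_div_three_pow] at h
  refine h.congr fun z ↦ ?_
  have hz : qq ((z : ℂ) / 3) ≠ 0 := Complex.exp_ne_zero _
  rw [η_pow_eight, mul_div_cancel_left₀ _ hz]

open UpperHalfPlane in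
lemma tendsto_g₁_sub_one_div {j : ℕ} (hj : j < 3) :
    Tendsto (fun z : ℍ ↦ (g₁ j z - 1) / qq ((z : ℂ) / 3)) atImInfty
      (𝓝 (-6 * qq (1 / 3) ^ j)) := by
  have h : Tendsto (fun z : ℍ ↦ 3 / 2 * ((E₂ z - 1) / qq ((z : ℂ) / 3)) -
      1 / 4 * ∑ m ∈ (Finset.range 3).filter (fun m ↦ ¬ m % 3 = j % 3),
        (E₂ (((z : ℂ) + m) / 3) - 1) / qq ((z : ℂ) / 3)) atImInfty
      (𝓝 (3 / 2 * 0 - 1 / 4 * ∑ m ∈ (Finset.range 3).filter (fun m ↦ ¬ m % 3 = j % 3),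
        -24 * qq (1 / 3) ^ m)) :=
    (tendsto_E₂_sub_one_div.const_mul _).sub
      ((tendsto_finsetSum _ fun m _ ↦ tendsto_E₂_add_div_three m).const_mul _)
  have hcard : ((Finset.range 3).filter (fun m ↦ ¬ m % 3 = j % 3)).card = 2 := by
    interval_cases j <;> rfl
  have hsum : 3 / 2 * 0 - 1 / 4 * ∑ m ∈ (Finset.range 3).filter (fun m ↦ ¬ m % 3 = j % 3),
      -24 * qq (1 / 3) ^ m = -6 * qq (1 / 3) ^ j := by
    have hρ := cubeRoot_sq_add
    interval_cases j <;> simp [-one_div, Finset.sum_filter, Finset.sum_range_succ] <;>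
      linear_combination -6 * hρ
  rw [hsum] at h
  refine h.congr fun z ↦ ?_
  rw [← Finset.sum_div, Finset.sum_sub_distrib, Finset.sum_const, hcard, g₁]
  simp only [nsmul_eq_mul]
  push_cast
  ring

open UpperHalfPlane in
/-- The leading terms cancel: `gDefect j` is of smaller order than `q^{1/3} ∼ η⁸` at the cusp. -/
lemma tendsto_gDefect_div_η_pow_eight {j : ℕ} (hj : j < 3) :
    Tendsto (fun z : ℍ ↦ gDefect j z / η z ^ 8) atImInfty (𝓝 0) := by
  have hs := tendsto_nhds_of_tendsto_nhdsWithin tendsto_qq_div_three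
  have hg := tendsto_g₁_sub_one_div hj
  have hη := tendsto_η_pow_eight_div
  have h := ((((hg.pow 2).mul hs).add (hg.const_mul 2)).sub tendsto_E₄_sub_one_div).add
    (hη.const_mul (12 * qq (1 / 3) ^ j))
  have h' := h.div hη one_ne_zero
  rw [show ((-6 * qq (1 / 3) ^ j) ^ 2 * 0 + 2 * (-6 * qq (1 / 3) ^ j) - 0 +
    12 * qq (1 / 3) ^ j * 1) / 1 = 0 by ring] at h'
  refine h'.congr fun z ↦ ?_
  have hz : qq ((z : ℂ) / 3) ≠ 0 := Complex.exp_ne_zero _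
  rw [Pi.div_apply, gDefect]
  rw [← div_div_div_cancel_right₀ hz (g₁ j z ^ 2 - E₄ z + 12 * qq (1 / 3) ^ j * η z ^ 8)]
  congr 1
  field_simp
  ring

/-- The product of the three functions `gDefect j`, as a function on the upper half plane. -/
noncomputable def gDefectProd (z : UpperHalfPlane) : ℂ := gDefect 0 z * gDefect 1 z * gDefect 2 z

open UpperHalfPlane ModularForm in
lemma gDefectProd_slash_S : (gDefectProd ∣[(12 : ℤ)] ModularGroup.S) = gDefectProd := by
  ext z
  have hz : (z : ℂ) ≠ 0 := z.ne_zero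
  have e : ((ModularGroup.S • z : ℍ) : ℂ) = -1 / (z : ℂ) := by
    rw [UpperHalfPlane.modular_S_smul]
    simp [neg_div]
  rw [SL_slash_apply, ModularGroup.denom_S, gDefectProd, gDefectProd, e,
    gDefect_neg_inv (by norm_num) z.im_pos, gDefect_neg_inv (by norm_num) z.im_pos,
    gDefect_neg_inv (by norm_num) z.im_pos]
  rw [zpow_neg, show (12 : ℤ) = (12 : ℕ) by rfl, zpow_natCast]
  field_simp

open UpperHalfPlane ModularForm in
lemma gDefectProd_slash_T : (gDefectProd ∣[(12 : ℤ)] ModularGroup.T) = gDefectProd := by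
  ext z
  have e : ((ModularGroup.T • z : ℍ) : ℂ) = (z : ℂ) + 1 := by
    rw [modular_T_smul, coe_vadd]
    simp [add_comm]
  have hd : denom (ModularGroup.T : GL (Fin 2) ℝ) z = 1 := by
    rw [ModularGroup.denom_apply]
    simp [ModularGroup.T]
  rw [SL_slash_apply, hd, one_zpow, mul_one, gDefectProd, gDefectProd, e,
    gDefect_add_one (by norm_num), gDefect_add_one (by norm_num), gDefect_add_one (by norm_num),
    ← gDefect_mod_three (2 + 1)]
  norm_num
  ring

open UpperHalfPlane in
lemma discriminant_eq_η_pow_eight_pow (z : ℍ) : ModularForm.discriminant z = (η z ^ 8) ^ 3 := by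
  rw [ModularForm.discriminant, η_eq_mathlib, ← pow_mul]

open UpperHalfPlane in
lemma η_ne_zero (z : ℍ) : η z ≠ 0 := by
  rw [η_eq_mathlib]
  exact ModularForm.eta_ne_zero z.2

open UpperHalfPlane in
lemma tendsto_gDefectProd_div_discriminant :
    Tendsto (fun z : ℍ ↦ gDefectProd z / ModularForm.discriminant z) atImInfty (𝓝 0) := by
  have h := ((tendsto_gDefect_div_η_pow_eight (j := 0) (by norm_num)).mul
    (tendsto_gDefect_div_η_pow_eight (j := 1) (by norm_num))).mul
    (tendsto_gDefect_div_η_pow_eight (j := 2) (by norm_num))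
  rw [mul_zero] at h
  refine h.congr fun z ↦ ?_
  rw [gDefectProd, discriminant_eq_η_pow_eight_pow]
  have := η_ne_zero z
  field_simp

open UpperHalfPlane in
lemma isZeroAtImInfty_gDefectProd : IsZeroAtImInfty gDefectProd := by
  have h := tendsto_gDefectProd_div_discriminant.mul ModularForm.discriminant_isZeroAtImInfty
  rw [mul_zero] at h
  exact h.congr fun z ↦ div_mul_cancel₀ _ (ModularForm.discriminant_ne_zero z)

open UpperHalfPlane MatrixGroups ModularForm in
/-- `gDefectProd` as a cusp form of weight 12 and level one. -/
noncomputable def gDefectCuspForm : CuspForm 𝒮ℒ 12 where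
  toFun := gDefectProd
  slash_action_eq' A hA := by
    obtain ⟨A, rfl⟩ := hA
    exact SlashInvariantForm.slash_action_generators_SL2Z gDefectProd_slash_S gDefectProd_slash_T A
  holo' := by
    rw [UpperHalfPlane.mdifferentiable_iff]
    refine (((differentiableOn_gDefect 0).mul (differentiableOn_gDefect 1)).mul
      (differentiableOn_gDefect 2)).congr fun z hz ↦ ?_
    simp [gDefectProd, ofComplex_apply_of_im_pos hz]
  zero_at_cusps' hc := by
    rw [Subgroup.IsArithmetic.isCusp_iff_isCusp_SL2Z] at hc
    rw [OnePoint.isZeroAt_iff_forall_SL2Z hc]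
    intro γ _
    rw [SlashInvariantForm.slash_action_generators_SL2Z gDefectProd_slash_S gDefectProd_slash_T]
    exact isZeroAtImInfty_gDefectProd

open UpperHalfPlane in
lemma gDefectProd_eq_zero (z : ℍ) : gDefectProd z = 0 := by
  obtain ⟨c, hc⟩ := CuspForm.exists_smul_discriminant_of_weight_eq_twelve gDefectCuspForm
  have h (w : ℍ) : c * ModularForm.discriminant w = gDefectProd w := DFunLike.congr_fun hc w
  have hc0 : c = 0 := by
    refine tendsto_nhds_unique (tendsto_const_nhds (f := atImInfty)) ?_
    refine tendsto_gDefectProd_div_discriminant.congr fun w ↦ ?_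
    rw [← h, mul_div_cancel_right₀ _ (ModularForm.discriminant_ne_zero w)]
  rw [← h, hc0, zero_mul]

lemma exists_gDefect_eq_zero : ∃ j < 3, ∀ τ : ℂ, 0 < τ.im → gDefect j τ = 0 := by
  have hopen : IsOpen {τ : ℂ | 0 < τ.im} := isOpen_lt continuous_const Complex.continuous_im
  have hconn : IsPreconnected {τ : ℂ | 0 < τ.im} := (convex_halfSpace_im_gt 0).isPreconnected
  have han (j : ℕ) : AnalyticOnNhd ℂ (gDefect j) {τ : ℂ | 0 < τ.im} :=
    (differentiableOn_gDefect j).analyticOnNhd hopen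
  rcases ((han 0).mul (han 1)).eq_zero_or_eq_zero_of_mul_eq_zero (han 2)
    (fun τ hτ ↦ gDefectProd_eq_zero ⟨τ, hτ⟩) hconn with h | h
  · rcases (han 0).eq_zero_or_eq_zero_of_mul_eq_zero (han 1) h hconn with h | h
    · exact ⟨0, by norm_num, h⟩
    · exact ⟨1, by norm_num, h⟩
  · exact ⟨2, by norm_num, h⟩

lemma gDefect_add_nat (j n : ℕ) (τ : ℂ) : gDefect j (τ + n) = gDefect (j + n) τ := by
  induction n generalizing j with
  | zero => simp
  | succ n ih =>
    have h := gDefect_add_one (Nat.mod_lt j three_pos) (τ + n)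
    rw [gDefect_mod_three, ← gDefect_mod_three (j % 3 + 1), Nat.mod_add_mod,
      gDefect_mod_three] at h
    push_cast
    rw [← add_assoc, h, ih, add_right_comm, add_assoc]

lemma gDefect_eq_zero (j : ℕ) {τ : ℂ} (hτ : 0 < τ.im) : gDefect j τ = 0 := by
  obtain ⟨i, hi, h⟩ := exists_gDefect_eq_zero
  have h' := h (τ + (j + (3 - i) : ℕ)) (by simpa using hτ)
  rwa [gDefect_add_nat, ← gDefect_mod_three, show (i + (j + (3 - i))) % 3 = j % 3 by omega,
    gDefect_mod_three] at h'

theorem stmt4 (j : ℕ) (hj : j < 3) (τ : ℂ) (hτ : 0 < τ.im) :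
    g₁ j τ ^ 2 = E₄ τ - 12 * ((-1 + Complex.I * Real.sqrt 3) / 2) ^ j * η τ ^ 8 := by
  have h := gDefect_eq_zero j hτ
  rw [gDefect, ← cubeRoot_eq_exp] at h
  linear_combination h
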